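/- Let B(q) = \sum_{n\ge 0} b_n q^n be a power series with non-negative real coefficients b_n that are weakly increasing in n, with radius of convergence at least one. Suppose \lambda, \alpha, \beta, \gamma are real numbers with \lambda > 0 and \gamma > 0 such that (i) B(e^{-t}) \sim \lambda (\log(1/t))^{\alpha} t^{\beta} e^{\gamma/t} as t \to 0^+ along the positive reals, and (ii) for every \Delta > 0 there exist constants C, \delta > 0 such that |B(e^{-z})| \le C (\log(1/|z|))^{\alpha} |z|^{\beta} e^{\gamma/|z|} for all z = x + iy with x > 0, |y| \le \Delta x and |z| < \delta. Then b_n \sim \frac{\lambda \gamma^{\beta/2 + 1/4} (\log n)^{\alpha}}{2^{\alpha+1} \sqrt{\pi} n^{\beta/2 + 3/4}} e^{2\sqrt{\gamma n}} as n \to \infty. -/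

import Mathlib

open Filter Topology Set
open MeasureTheory

/-- A locally bounded family of holomorphic functions on a disc that tends to zero at the nonzero
real points also tends to zero at the centre. -/
lemma tendsto_zero_center_of_tendsto_zero_real {ι : Type*} {l : Filter ι} {h : ι → ℂ → ℂ}
    {M R : ℝ} (hR : 0 < R) (hM : 0 < M)
    (hd : ∀ᶠ i in l, DifferentiableOn ℂ (h i) (Metric.ball 0 R))
    (hb : ∀ᶠ i in l, ∀ z ∈ Metric.ball (0 : ℂ) R, ‖h i z‖ ≤ M)
    (h0 : ∀ v : ℝ, v ≠ 0 → |v| < R → Tendsto (fun i => h i v) l (𝓝 0)) :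
    Tendsto (fun i => h i 0) l (𝓝 0) := by
  rw [Metric.tendsto_nhds]
  intro ε hε
  obtain ⟨v, hv0, hvR, hvε⟩ : ∃ v : ℝ, 0 < v ∧ v < R ∧ 2 * M / R * v < ε / 2 := by
    have h1 : 0 < 2 * M / R := by positivity
    refine ⟨min (R / 2) (ε / 4 / (2 * M / R)), by positivity, ?_, ?_⟩
    · exact (min_le_left _ _).trans_lt (by linarith)
    · calc 2 * M / R * min (R / 2) (ε / 4 / (2 * M / R))
          ≤ 2 * M / R * (ε / 4 / (2 * M / R)) := by gcongr; exact min_le_right _ _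
        _ = ε / 4 := by field_simp
        _ < ε / 2 := by linarith
  have hvb : (v : ℂ) ∈ Metric.ball (0 : ℂ) R := by
    simpa [abs_of_pos hv0] using hvR
  filter_upwards [hd, hb, Metric.tendsto_nhds.1 (h0 v hv0.ne' (by rwa [abs_of_pos hv0])) (ε / 2)
    (by positivity)] with i hdi hbi hvi
  have hmaps : MapsTo (h i) (Metric.ball 0 R) (Metric.closedBall (h i 0) (2 * M)) := by
    intro z hz
    rw [Metric.mem_closedBall, dist_eq_norm]
    calc ‖h i z - h i 0‖ ≤ ‖h i z‖ + ‖h i 0‖ := norm_sub_le _ _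
      _ ≤ M + M := add_le_add (hbi z hz) (hbi 0 (Metric.mem_ball_self hR))
      _ = 2 * M := by ring
  have key := Complex.dist_le_div_mul_dist_of_mapsTo_ball hdi hmaps hvb
  have hdist : dist (v : ℂ) 0 = v := by simp [abs_of_pos hv0]
  rw [hdist] at key
  calc dist (h i 0) 0 ≤ dist (h i v) (h i 0) + dist (h i v) 0 := dist_triangle_left _ _ _
    _ < ε / 2 + ε / 2 := add_lt_add (key.trans_lt hvε) hvi
    _ = ε := by ring

lemma tendsto_zero_of_tendsto_zero_real {ι : Type*} {l : Filter ι} {h : ι → ℂ → ℂ}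
    {M R : ℝ} (hR : 0 < R) (hM : 0 < M)
    (hd : ∀ᶠ i in l, DifferentiableOn ℂ (h i) (Metric.ball 0 R))
    (hb : ∀ᶠ i in l, ∀ z ∈ Metric.ball (0 : ℂ) R, ‖h i z‖ ≤ M)
    (h0 : ∀ v : ℝ, v ≠ 0 → |v| < R → Tendsto (fun i => h i v) l (𝓝 0)) {z : ℂ}
    (hz : ‖z‖ < R / 2) :
    Tendsto (fun i => h i z) l (𝓝 0) := by
  have main : ∀ (N : ℕ) (h : ι → ℂ → ℂ) (M : ℝ), 0 < M →
      (∀ᶠ i in l, DifferentiableOn ℂ (h i) (Metric.ball 0 R)) →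
      (∀ᶠ i in l, ∀ z ∈ Metric.ball (0 : ℂ) R, ‖h i z‖ ≤ M) →
      (∀ v : ℝ, v ≠ 0 → |v| < R → Tendsto (fun i => h i v) l (𝓝 0)) →
      ∀ ε > 0, ∀ᶠ i in l, ‖h i z‖ ≤ ε + M * (2 / R * ‖z‖) ^ N := by
    intro N
    induction N with
    | zero =>
      intro h M hM hd hb h0 ε hε
      filter_upwards [hb] with i hbi
      have := hbi z (by simp; linarith)
      simp; linarith
    | succ N ih =>
      intro h M hM hd hb h0 ε hε
      have hc := tendsto_zero_center_of_tendsto_zero_real hR hM hd hb h0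
      have hnhds : Metric.ball (0 : ℂ) R ∈ 𝓝 0 := Metric.ball_mem_nhds _ hR
      have hstep := ih (fun i => dslope (h i) 0) (2 * M / R) (by positivity)
        (by
          filter_upwards [hd] with i hdi
          exact (Complex.differentiableOn_dslope hnhds).2 hdi)
        (by
          filter_upwards [hd, hb] with i hdi hbi z hz
          refine Complex.norm_dslope_le_div_of_mapsTo_ball hdi ?_ hz
          intro w hw
          rw [Metric.mem_closedBall, dist_eq_norm]
          calc ‖h i w - h i 0‖ ≤ ‖h i w‖ + ‖h i 0‖ := norm_sub_le _ _
            _ ≤ M + M := add_le_add (hbi w hw) (hbi 0 (Metric.mem_ball_self hR))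
            _ = 2 * M := by ring)
        (by
          intro v hv hvR
          have hv' : (v : ℂ) ≠ 0 := by exact_mod_cast hv
          have : Tendsto (fun i => ((v : ℂ) - 0)⁻¹ • (h i v - h i 0)) l
              (𝓝 (((v : ℂ) - 0)⁻¹ • ((0 : ℂ) - 0))) := ((h0 v hv hvR).sub hc).const_smul _
          simpa [dslope_of_ne _ hv', slope] using this)
        (ε / (2 * (‖z‖ + 1))) (by positivity)
      filter_upwards [hstep, Metric.tendsto_nhds.1 hc (ε / 2) (by positivity)] with i hi hci
      have heq : h i z = h i 0 + z * dslope (h i) 0 z := by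
        have := sub_smul_dslope (h i) 0 z
        simp only [sub_zero, smul_eq_mul] at this
        rw [this]; ring
      rw [dist_zero_right] at hci
      have h2 : ‖z‖ * (ε / (2 * (‖z‖ + 1))) ≤ ε / 2 := by
        rw [mul_div_assoc', div_le_div_iff₀ (by positivity) (by positivity)]
        nlinarith [norm_nonneg z]
      calc ‖h i z‖ ≤ ‖h i 0‖ + ‖z‖ * ‖dslope (h i) 0 z‖ := by
            rw [heq]; exact (norm_add_le _ _).trans_eq (by rw [norm_mul])
        _ ≤ ε / 2 + ‖z‖ * (ε / (2 * (‖z‖ + 1)) + 2 * M / R * (2 / R * ‖z‖) ^ N) := by gcongr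
        _ = ε / 2 + ‖z‖ * (ε / (2 * (‖z‖ + 1))) + M * (2 / R * ‖z‖) ^ (N + 1) := by ring
        _ ≤ ε + M * (2 / R * ‖z‖) ^ (N + 1) := by linarith
  rw [Metric.tendsto_nhds]
  intro ε hε
  have hq : 2 / R * ‖z‖ < 1 := by
    rw [div_mul_eq_mul_div, div_lt_one hR]; linarith
  have hpow : Tendsto (fun N : ℕ => M * (2 / R * ‖z‖) ^ N) atTop (𝓝 (M * 0)) :=
    (tendsto_pow_atTop_nhds_zero_of_lt_one (by positivity) hq).const_mul M
  rw [mul_zero] at hpow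
  obtain ⟨N, hN⟩ := (hpow.eventually (gt_mem_nhds (half_pos hε))).exists
  filter_upwards [main N h M hM hd hb h0 (ε / 2) (by positivity)] with i hi
  rw [dist_zero_right]
  linarith

/-- A form of Vitali's convergence theorem: pointwise convergence on a real interval propagates to
a complex disc. -/
lemma tendsto_of_tendsto_real {ι : Type*} {l : Filter ι} {f : ι → ℂ → ℂ} {g : ℂ → ℂ}
    {M R : ℝ} (hR : 0 < R)
    (hd : ∀ᶠ i in l, DifferentiableOn ℂ (f i) (Metric.ball 0 R))
    (hb : ∀ᶠ i in l, ∀ z ∈ Metric.ball (0 : ℂ) R, ‖f i z‖ ≤ M)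
    (hg : DifferentiableOn ℂ g (Metric.ball 0 R)) (hgb : ∀ z ∈ Metric.ball (0 : ℂ) R, ‖g z‖ ≤ M)
    (h0 : ∀ v : ℝ, |v| < R → Tendsto (fun i => f i v) l (𝓝 (g v))) {z : ℂ} (hz : ‖z‖ < R / 2) :
    Tendsto (fun i => f i z) l (𝓝 (g z)) := by
  have hM : 0 ≤ M := (norm_nonneg _).trans (hgb 0 (Metric.mem_ball_self hR))
  rw [← tendsto_sub_nhds_zero_iff]
  refine tendsto_zero_of_tendsto_zero_real (h := fun i z => f i z - g z) (M := M + M + 1) hR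
    (by linarith) ?_ ?_ ?_ hz
  · filter_upwards [hd] with i hi using hi.sub hg
  · filter_upwards [hb] with i hi w hw
    exact (norm_sub_le _ _).trans (by linarith [hi w hw, hgb w hw])
  · intro v _ hv
    exact tendsto_sub_nhds_zero_iff.2 (h0 v hv)

/-- The comparison function `λ (log (1/x))^α x^β e^{γ/x}`. -/
noncomputable def growth (lam α β γ x : ℝ) : ℝ :=
  lam * Real.log (1 / x) ^ α * x ^ β * Real.exp (γ / x)

lemma growth_pos {lam α β γ x : ℝ} (hlam : 0 < lam) (hx : 0 < x) (hx1 : x < 1) :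
    0 < growth lam α β γ x := by
  have : 0 < Real.log (1 / x) := Real.log_pos (by rw [one_div]; exact (one_lt_inv₀ hx).2 hx1)
  unfold growth
  positivity

lemma eventually_mem_Ioo_zero {a : ℝ} (ha : 0 < a) : ∀ᶠ x : ℝ in 𝓝[>] 0, x ∈ Ioo 0 a :=
  Ioo_mem_nhdsGT ha

lemma tendsto_log_one_div_nhdsGT : Tendsto (fun x : ℝ => Real.log (1 / x)) (𝓝[>] 0) atTop := by
  simp only [one_div]
  exact Real.tendsto_log_atTop.comp tendsto_inv_nhdsGT_zero

lemma tendsto_growth_ratio {lam α β γ : ℝ} (hlam : 0 < lam) {θ : ℝ → ℝ}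
    (hθ : Tendsto θ (𝓝[>] 0) (𝓝 1)) :
    Tendsto (fun x => growth lam α β γ (x * θ x) / growth lam α β γ x
      * Real.exp (γ / x - γ / (x * θ x))) (𝓝[>] 0) (𝓝 1) := by
  have hlogθ : Tendsto (fun x => Real.log (θ x)) (𝓝[>] 0) (𝓝 0) := by
    simpa using hθ.log one_ne_zero
  have hratio : Tendsto (fun x => 1 - Real.log (θ x) / Real.log (1 / x)) (𝓝[>] 0) (𝓝 1) := by
    simpa using (hlogθ.div_atTop tendsto_log_one_div_nhdsGT).const_sub 1
  have h1 : Tendsto (fun x => (1 - Real.log (θ x) / Real.log (1 / x)) ^ α) (𝓝[>] 0) (𝓝 1) := by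
    simpa using hratio.rpow_const (p := α) (Or.inl one_ne_zero)
  have h2 : Tendsto (fun x => (θ x) ^ β) (𝓝[>] 0) (𝓝 1) := by
    simpa using hθ.rpow_const (p := β) (Or.inl one_ne_zero)
  have h3 := h1.mul h2
  rw [one_mul] at h3
  refine h3.congr' ?_
  filter_upwards [eventually_mem_Ioo_zero one_pos, hθ.eventually_const_lt zero_lt_one,
    hratio.eventually_const_lt zero_lt_one] with x hx hθx hrx
  have hL : 0 < Real.log (1 / x) :=
    Real.log_pos (by rw [one_div]; exact (one_lt_inv₀ hx.1).2 hx.2)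
  have hL2 : Real.log (1 / (x * θ x))
      = Real.log (1 / x) * (1 - Real.log (θ x) / Real.log (1 / x)) := by
    rw [mul_sub, mul_div_cancel₀ _ hL.ne', mul_one, one_div, one_div, Real.log_inv, Real.log_inv,
      Real.log_mul hx.1.ne' hθx.ne']
    ring
  have hx0 := hx.1
  rw [growth, growth, hL2, Real.mul_rpow hL.le hrx.le, Real.mul_rpow hx.1.le hθx.le, Real.exp_sub]
  have := (Real.rpow_pos_of_pos hL α).ne'
  have := (Real.rpow_pos_of_pos hx.1 β).ne'
  have := (Real.exp_pos (γ / x)).ne'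
  have := (Real.exp_pos (γ / (x * θ x))).ne'
  have := hlam.ne'
  generalize Real.exp (γ / x) = E1 at *
  generalize Real.exp (γ / (x * θ x)) = E2 at *
  field_simp

lemma tendsto_one_add_sqrt_mul (v : ℝ) :
    Tendsto (fun x : ℝ => 1 + √x * v) (𝓝[>] 0) (𝓝 1) := by
  have h : Continuous fun x : ℝ => 1 + √x * v := by fun_prop
  simpa using (h.tendsto 0).mono_left nhdsWithin_le_nhds

lemma tendsto_growth_ratio_gaussian {lam α β γ : ℝ} (hlam : 0 < lam) (v : ℝ) :
    Tendsto (fun x => Real.exp (γ * v / √x) * growth lam α β γ (x * (1 + √x * v))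
      / growth lam α β γ x) (𝓝[>] 0) (𝓝 (Real.exp (γ * v ^ 2))) := by
  have hθ := tendsto_one_add_sqrt_mul v
  have h1 := tendsto_growth_ratio (α := α) (β := β) (γ := γ) hlam hθ
  have h2 : Tendsto (fun x : ℝ => Real.exp (γ * v ^ 2 / (1 + √x * v))) (𝓝[>] 0)
      (𝓝 (Real.exp (γ * v ^ 2 / 1))) :=
    (Real.continuous_exp.tendsto _).comp (tendsto_const_nhds.div hθ one_ne_zero)
  have h3 := h1.mul h2
  rw [one_mul, div_one] at h3
  refine h3.congr' ?_
  filter_upwards [self_mem_nhdsWithin, hθ.eventually_const_lt zero_lt_one] with x hx hθx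
  have hs : 0 < √x := Real.sqrt_pos.2 hx
  have hexp : γ / x - γ / (x * (1 + √x * v)) + γ * v ^ 2 / (1 + √x * v) = γ * v / √x := by
    have hx2 : x = √x * √x := (Real.mul_self_sqrt (le_of_lt hx)).symm
    generalize √x = r at *
    subst hx2
    field_simp
    ring
  rw [mul_assoc, ← Real.exp_add, hexp]
  ring

/-- The series `∑ b_n e^{-zn}`. -/
noncomputable def expSeries (b : ℕ → ℝ) (z : ℂ) : ℂ := ∑' n : ℕ, (b n : ℂ) * Complex.exp (-z * n)

section

variable {b : ℕ → ℝ} (hb : ∀ n, 0 ≤ b n)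
  (hradius : ∀ q : ℝ, |q| < 1 → Summable (fun n : ℕ => b n * q ^ n))

include hradius in
lemma summable_mul_exp {x : ℝ} (hx : 0 < x) : Summable fun n : ℕ => b n * Real.exp (-x * n) := by
  have h := hradius (Real.exp (-x)) (by rw [abs_of_pos (Real.exp_pos _)]; simpa using hx)
  refine h.congr fun n => ?_
  rw [← Real.exp_nat_mul]
  ring_nf

include hb in
lemma norm_mul_cexp (z : ℂ) (n : ℕ) :
    ‖(b n : ℂ) * Complex.exp (-z * n)‖ = b n * Real.exp (-z.re * n) := by
  rw [norm_mul, Complex.norm_real, Real.norm_of_nonneg (hb n), Complex.norm_exp]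
  simp

include hb hradius in
lemma summable_mul_cexp {z : ℂ} (hz : 0 < z.re) :
    Summable fun n : ℕ => (b n : ℂ) * Complex.exp (-z * n) := by
  refine Summable.of_norm ?_
  simp only [norm_mul_cexp hb]
  exact summable_mul_exp hradius hz

lemma expSeries_ofReal (x : ℝ) :
    expSeries b x = ((∑' n : ℕ, b n * Real.exp (-x * n) : ℝ) : ℂ) := by
  rw [expSeries, Complex.ofReal_tsum]
  push_cast
  rfl

include hb hradius in
lemma norm_expSeries_le {z : ℂ} (hz : 0 < z.re) :
    ‖expSeries b z‖ ≤ ∑' n : ℕ, b n * Real.exp (-z.re * n) := by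
  refine (norm_tsum_le_tsum_norm ?_).trans_eq ?_
  · exact (summable_mul_cexp hb hradius hz).norm
  · simp only [norm_mul_cexp hb]

include hb hradius in
lemma differentiableOn_expSeries : DifferentiableOn ℂ (expSeries b) {z | 0 < z.re} := by
  intro z hz
  have hz' : 0 < z.re := hz
  have hopen : IsOpen {w : ℂ | z.re / 2 < w.re} := isOpen_lt continuous_const Complex.continuous_re
  have h : DifferentiableOn ℂ (expSeries b) {w : ℂ | z.re / 2 < w.re} := by
    refine Complex.differentiableOn_tsum_of_summable_norm
      (summable_mul_exp hradius (half_pos hz')) (fun n => ?_) hopen fun n w hw => ?_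
    · exact (Differentiable.differentiableOn (by fun_prop))
    · rw [norm_mul_cexp hb]
      have : z.re / 2 < w.re := hw
      have := hb n
      gcongr
  exact (h.differentiableAt (hopen.mem_nhds (by simp; linarith))).differentiableWithinAt

/-- The series `∑ b_n e^{-zn}` along `z = x + x^{3/2} v`, normalised so as to converge to a
Gaussian moment generating function. -/
noncomputable def scaledSeries (b : ℕ → ℝ) (lam α β γ x : ℝ) (v : ℂ) : ℂ :=
  Complex.exp (γ * v / √x) * expSeries b (x * (1 + √x * v)) / growth lam α β γ x

variable {lam α β γ : ℝ} (hlam : 0 < lam)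
  (hreal : Tendsto (fun t : ℝ => (∑' n : ℕ, b n * Real.exp (-t * n)) / growth lam α β γ t)
    (𝓝[>] (0:ℝ)) (𝓝 1))

include hlam hreal in
lemma tendsto_scaledSum (v : ℝ) :
    Tendsto (fun x : ℝ => Real.exp (γ * v / √x) *
      (∑' n : ℕ, b n * Real.exp (-(x * (1 + √x * v)) * n)) / growth lam α β γ x)
      (𝓝[>] 0) (𝓝 (Real.exp (γ * v ^ 2))) := by
  have hθ := tendsto_one_add_sqrt_mul v
  have hto : Tendsto (fun x : ℝ => x * (1 + √x * v)) (𝓝[>] 0) (𝓝[>] 0) := by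
    refine tendsto_nhdsWithin_iff.2 ⟨?_, ?_⟩
    · simpa using (tendsto_nhdsWithin_of_tendsto_nhds tendsto_id).mul hθ
    · filter_upwards [self_mem_nhdsWithin, hθ.eventually_const_lt zero_lt_one] with x hx hθx
      exact mul_pos hx hθx
  have h := (hreal.comp hto).mul (tendsto_growth_ratio_gaussian (α := α) (β := β) (γ := γ) hlam v)
  rw [one_mul] at h
  refine h.congr' ?_
  filter_upwards [hto.eventually (eventually_mem_Ioo_zero one_pos)] with x hx
  have := (growth_pos (α := α) (β := β) (γ := γ) hlam hx.1 hx.2).ne'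
  simp only [Function.comp]
  field_simp

lemma scaledSeries_ofReal (x v : ℝ) :
    scaledSeries b lam α β γ x v = ((Real.exp (γ * v / √x) *
      (∑' n : ℕ, b n * Real.exp (-(x * (1 + √x * v)) * n)) / growth lam α β γ x : ℝ) : ℂ) := by
  rw [scaledSeries]
  have : ((x : ℂ) * (1 + √x * v)) = ((x * (1 + √x * v) : ℝ) : ℂ) := by push_cast; ring
  rw [this, expSeries_ofReal]
  push_cast
  ring

lemma re_scaled_arg (x : ℝ) (v : ℂ) : ((x : ℂ) * (1 + √x * v)).re = x * (1 + √x * v.re) := by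
  simp

include hb hradius hlam hreal in
lemma tendsto_scaledSeries (v : ℂ) :
    Tendsto (fun x : ℝ => scaledSeries b lam α β γ x v) (𝓝[>] 0)
      (𝓝 (Complex.exp (γ * v ^ 2))) := by
  set R : ℝ := 2 * (‖v‖ + 1) with hRdef
  have hR : 0 < R := by positivity
  have hpos : ∀ᶠ x : ℝ in 𝓝[>] 0, 0 < x ∧ x < 1 ∧ 0 < 1 + √x * (-R) := by
    filter_upwards [eventually_mem_Ioo_zero one_pos,
      (tendsto_one_add_sqrt_mul (-R)).eventually_const_lt zero_lt_one] with x hx hx2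
    exact ⟨hx.1, hx.2, hx2⟩
  have hre : ∀ x : ℝ, 0 < x → 0 < 1 + √x * (-R) → ∀ ρ : ℝ, |ρ| ≤ R → 0 < x * (1 + √x * ρ) := by
    intro x hx hx2 ρ hρ
    have : √x * (-R) ≤ √x * ρ :=
      mul_le_mul_of_nonneg_left (abs_le.1 hρ).1 (Real.sqrt_nonneg x)
    exact mul_pos hx (by linarith)
  refine tendsto_of_tendsto_real (g := fun v => Complex.exp (γ * v ^ 2))
    (M := 2 * (Real.exp (|γ| * R ^ 2) + 1)) hR ?_ ?_ ?_ ?_ ?_ (z := v) (by rw [hRdef]; linarith)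
  · filter_upwards [hpos] with x ⟨hx, hx1, hx2⟩
    unfold scaledSeries
    refine DifferentiableOn.div_const (DifferentiableOn.mul
      (Differentiable.differentiableOn (by fun_prop)) ?_) _
    refine (differentiableOn_expSeries hb hradius).comp
      (Differentiable.differentiableOn (by fun_prop)) fun w hw => ?_
    rw [mem_ball_zero_iff] at hw
    change 0 < (_ : ℂ).re
    rw [re_scaled_arg]
    exact hre x hx hx2 _ ((Complex.abs_re_le_norm w).trans hw.le)
  · have hlt : ∀ w : ℝ, |w| = R → Real.exp (γ * w ^ 2) < Real.exp (|γ| * R ^ 2) + 1 := by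
      intro w hw
      have : γ * w ^ 2 ≤ |γ| * R ^ 2 := by
        rw [← hw, sq_abs]; exact mul_le_mul_of_nonneg_right (le_abs_self _) (sq_nonneg _)
      linarith [Real.exp_le_exp.2 this]
    filter_upwards [hpos,
      (tendsto_scaledSum hlam hreal R).eventually_lt_const (hlt R (abs_of_pos hR)),
      (tendsto_scaledSum hlam hreal (-R)).eventually_lt_const
        (hlt (-R) (by rw [abs_neg, abs_of_pos hR]))] with x ⟨hx, hx1, hx2⟩ hA hB w hw
    rw [mem_ball_zero_iff] at hw
    have hwR : |w.re| ≤ R := (Complex.abs_re_le_norm w).trans hw.le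
    have hg := growth_pos (α := α) (β := β) (γ := γ) hlam hx hx1
    have hnorm : ‖scaledSeries b lam α β γ x w‖ ≤ Real.exp (γ * w.re / √x) *
        (∑' n : ℕ, b n * Real.exp (-(x * (1 + √x * w.re)) * n)) / growth lam α β γ x := by
      rw [scaledSeries, norm_div, norm_mul, Complex.norm_exp, Complex.norm_real,
        Real.norm_of_nonneg hg.le]
      have e1 : ((γ : ℂ) * w / √x).re = γ * w.re / √x := by
        rw [Complex.div_ofReal_re, Complex.re_ofReal_mul]
      rw [e1]
      gcongr
      rw [← re_scaled_arg]
      refine norm_expSeries_le hb hradius ?_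
      rw [re_scaled_arg]
      exact hre x hx hx2 _ hwR
    refine hnorm.trans ?_
    have hterm : Real.exp (γ * w.re / √x) * (∑' n : ℕ, b n * Real.exp (-(x * (1 + √x * w.re)) * n))
        ≤ Real.exp (γ * R / √x) * (∑' n : ℕ, b n * Real.exp (-(x * (1 + √x * R)) * n))
        + Real.exp (γ * (-R) / √x) * (∑' n : ℕ, b n * Real.exp (-(x * (1 + √x * (-R))) * n)) := by
      have s1 := (summable_mul_exp hradius (hre x hx hx2 _ hwR)).mul_left
        (Real.exp (γ * w.re / √x))
      have s2 := (summable_mul_exp hradius (hre x hx hx2 R (abs_of_pos hR).le)).mul_left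
        (Real.exp (γ * R / √x))
      have s3 := (summable_mul_exp hradius (hre x hx hx2 (-R)
        (by rw [abs_neg, abs_of_pos hR]))).mul_left (Real.exp (γ * (-R) / √x))
      rw [← tsum_mul_left, ← tsum_mul_left, ← tsum_mul_left, ← s2.tsum_add s3]
      refine s1.tsum_le_tsum (fun n => ?_) (s2.add s3)
      have hsplit : ∀ ρ : ℝ, Real.exp (γ * ρ / √x) * (b n * Real.exp (-(x * (1 + √x * ρ)) * n))
          = b n * Real.exp (-x * n) * Real.exp (ρ * (γ / √x - x * √x * n)) := by
        intro ρ
        rw [mul_left_comm, mul_assoc, ← Real.exp_add, ← Real.exp_add]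
        ring_nf
      rw [hsplit, hsplit, hsplit, ← mul_add]
      refine mul_le_mul_of_nonneg_left ?_ (mul_nonneg (hb n) (Real.exp_pos _).le)
      set c := γ / √x - x * √x * n
      rcases le_total 0 c with hc | hc
      · have : w.re * c ≤ R * c := mul_le_mul_of_nonneg_right (abs_le.1 hwR).2 hc
        linarith [Real.exp_le_exp.2 this, Real.exp_pos (-R * c)]
      · have : w.re * c ≤ -R * c := mul_le_mul_of_nonpos_right (abs_le.1 hwR).1 hc
        linarith [Real.exp_le_exp.2 this, Real.exp_pos (R * c)]
    calc _ ≤ _ := div_le_div_of_nonneg_right hterm hg.le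
      _ ≤ _ := by rw [add_div]; linarith
  · exact Differentiable.differentiableOn (by fun_prop)
  · intro w hw
    rw [mem_ball_zero_iff] at hw
    rw [Complex.norm_exp]
    have h1 : ((γ : ℂ) * w ^ 2).re ≤ |γ| * R ^ 2 := by
      refine (Complex.re_le_norm _).trans ?_
      rw [norm_mul, norm_pow, Complex.norm_real, Real.norm_eq_abs]
      gcongr
    linarith [Real.exp_le_exp.2 h1, Real.exp_pos (|γ| * R ^ 2)]
  · intro u _
    simp only [scaledSeries_ofReal]
    have := (Complex.continuous_ofReal.tendsto _).comp (tendsto_scaledSum hlam hreal u)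
    rw [Complex.ofReal_exp] at this
    push_cast at this
    exact this

end

/-- The triangle function supported on `[-1, 1]`. -/
noncomputable def triangle (ξ : ℝ) : ℝ := max (1 - |ξ|) 0

/-- The Fejér kernel, whose Fourier transform is a multiple of the triangle function. -/
noncomputable def fejer (u : ℝ) : ℝ := Real.sinc (u / 2) ^ 2

lemma continuous_triangle : Continuous triangle := by unfold triangle; fun_prop

lemma triangle_nonneg (ξ : ℝ) : 0 ≤ triangle ξ := le_max_right _ _

lemma triangle_le_one (ξ : ℝ) : triangle ξ ≤ 1 :=
  max_le (by linarith [abs_nonneg ξ]) zero_le_one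

lemma triangle_zero : triangle 0 = 1 := by simp [triangle]

lemma triangle_neg (ξ : ℝ) : triangle (-ξ) = triangle ξ := by simp [triangle]

lemma triangle_eq_zero {ξ : ℝ} (h : 1 ≤ |ξ|) : triangle ξ = 0 := max_eq_right (by linarith)

lemma hasCompactSupport_triangle : HasCompactSupport triangle := by
  refine HasCompactSupport.of_support_subset_isCompact (isCompact_Icc (a := -1) (b := 1)) ?_
  intro ξ hξ
  by_contra h
  refine hξ (triangle_eq_zero ?_)
  rw [Set.mem_Icc, ← abs_le, not_le] at h
  exact h.le

lemma integrable_triangle : Integrable triangle :=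
  continuous_triangle.integrable_of_hasCompactSupport hasCompactSupport_triangle

lemma continuous_fejer : Continuous fejer := by unfold fejer; fun_prop

lemma fejer_nonneg (u : ℝ) : 0 ≤ fejer u := sq_nonneg _

lemma fejer_zero : fejer 0 = 1 := by simp [fejer]

lemma fejer_le_one (u : ℝ) : fejer u ≤ 1 := by
  unfold fejer
  rw [sq_le_one_iff_abs_le_one]
  exact Real.abs_sinc_le_one _

lemma fejer_eq {u : ℝ} (hu : u ≠ 0) : fejer u = (2 - 2 * Real.cos u) / u ^ 2 := by
  unfold fejer
  rw [Real.sinc_of_ne_zero (by positivity), div_pow, Real.sin_sq, Real.cos_sq]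
  field_simp
  ring_nf

lemma integrable_fejer : Integrable fejer := by
  refine (integrable_inv_one_add_sq.const_mul 5).mono' continuous_fejer.aestronglyMeasurable
    (Eventually.of_forall fun u => ?_)
  rw [Real.norm_of_nonneg (fejer_nonneg u), ← div_eq_mul_inv, le_div_iff₀ (by positivity)]
  have h1 := fejer_le_one u
  have h2 : fejer u * u ^ 2 ≤ 4 := by
    rcases eq_or_ne u 0 with rfl | hu
    · simp
    · rw [fejer_eq hu, div_mul_cancel₀ _ (by positivity)]
      linarith [Real.neg_one_le_cos u]
  linarith

lemma integral_triangle_mul_cexp (u : ℝ) :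
    ∫ ξ : ℝ, (triangle ξ : ℂ) * Complex.exp (ξ * u * Complex.I) = fejer u := by
  have hsupp : ∫ ξ : ℝ, (triangle ξ : ℂ) * Complex.exp (ξ * u * Complex.I)
      = ∫ ξ in (-1 : ℝ)..1, (triangle ξ : ℂ) * Complex.exp (ξ * u * Complex.I) := by
    rw [intervalIntegral.integral_eq_integral_of_support_subset]
    intro ξ hξ
    by_contra h
    apply hξ
    have : 1 ≤ |ξ| := by
      rw [Set.mem_Ioc, not_and_or, not_lt, not_le] at h
      rcases h with h | h
      · rw [abs_of_nonpos (by linarith)]; linarith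
      · rw [abs_of_nonneg (by linarith)]; linarith
    simp [triangle_eq_zero this]
  have hct := continuous_triangle
  have hcont : Continuous fun ξ : ℝ => (triangle ξ : ℂ) * Complex.exp (ξ * u * Complex.I) := by
    fun_prop
  rw [hsupp, ← intervalIntegral.integral_add_adjacent_intervals
    (hcont.intervalIntegrable (-1) 0) (hcont.intervalIntegrable 0 1)]
  have e1 : ∫ ξ in (-1 : ℝ)..0, (triangle ξ : ℂ) * Complex.exp (ξ * u * Complex.I)
      = ∫ ξ in (-1 : ℝ)..0, (1 + ξ : ℂ) * Complex.exp (ξ * u * Complex.I) := by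
    refine intervalIntegral.integral_congr fun ξ hξ => ?_
    rw [uIcc_of_le (by norm_num)] at hξ
    simp only [triangle, abs_of_nonpos hξ.2]
    rw [max_eq_left (by linarith [hξ.1])]
    push_cast; ring
  have e2 : ∫ ξ in (0 : ℝ)..1, (triangle ξ : ℂ) * Complex.exp (ξ * u * Complex.I)
      = ∫ ξ in (0 : ℝ)..1, (1 - ξ : ℂ) * Complex.exp (ξ * u * Complex.I) := by
    refine intervalIntegral.integral_congr fun ξ hξ => ?_
    rw [uIcc_of_le (by norm_num)] at hξ
    simp only [triangle, abs_of_nonneg hξ.1]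
    rw [max_eq_left (by linarith [hξ.2])]
    push_cast; ring
  rw [e1, e2]
  rcases eq_or_ne u 0 with rfl | hu
  · have h1 : ∀ ξ : ℝ, HasDerivAt (fun ξ : ℝ => (ξ : ℂ) + ξ ^ 2 / 2)
        ((1 + ξ : ℂ) * Complex.exp (ξ * (0 : ℝ) * Complex.I)) ξ := by
      intro ξ
      have h := (hasDerivAt_id (ξ : ℂ)).add (((hasDerivAt_id (ξ : ℂ)).pow 2).div_const 2)
      convert! h.comp_ofReal using 1
      simp
    have h2 : ∀ ξ : ℝ, HasDerivAt (fun ξ : ℝ => (ξ : ℂ) - ξ ^ 2 / 2)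
        ((1 - ξ : ℂ) * Complex.exp (ξ * (0 : ℝ) * Complex.I)) ξ := by
      intro ξ
      have h := (hasDerivAt_id (ξ : ℂ)).sub (((hasDerivAt_id (ξ : ℂ)).pow 2).div_const 2)
      convert! h.comp_ofReal using 1
      simp
    rw [intervalIntegral.integral_eq_sub_of_hasDerivAt (fun ξ _ => h1 ξ)
      (Continuous.intervalIntegrable (by fun_prop) _ _),
      intervalIntegral.integral_eq_sub_of_hasDerivAt (fun ξ _ => h2 ξ)
      (Continuous.intervalIntegrable (by fun_prop) _ _), fejer_zero]
    push_cast; norm_num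
  · have hu' : (u : ℂ) ≠ 0 := by exact_mod_cast hu
    have hexp : ∀ ξ : ℂ, HasDerivAt (fun ξ : ℂ => Complex.exp (ξ * u * Complex.I))
        (Complex.exp (ξ * u * Complex.I) * (u * Complex.I)) ξ := by
      intro ξ
      have := (((hasDerivAt_id ξ).mul_const (u : ℂ)).mul_const Complex.I).cexp
      simpa using this
    have h1 : ∀ ξ : ℝ, HasDerivAt (fun ξ : ℝ => (1 + ξ : ℂ) *
        (Complex.exp (ξ * u * Complex.I) / (u * Complex.I)) -
        Complex.exp (ξ * u * Complex.I) / (u * Complex.I) ^ 2)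
        ((1 + ξ : ℂ) * Complex.exp (ξ * u * Complex.I)) ξ := by
      intro ξ
      have h := (((hasDerivAt_id (ξ : ℂ)).const_add 1).mul
        ((hexp ξ).div_const (u * Complex.I))).sub ((hexp ξ).div_const ((u * Complex.I) ^ 2))
      convert! h.comp_ofReal using 1
      simp only [id]
      field_simp
      ring
    have h2 : ∀ ξ : ℝ, HasDerivAt (fun ξ : ℝ => (1 - ξ : ℂ) *
        (Complex.exp (ξ * u * Complex.I) / (u * Complex.I)) +
        Complex.exp (ξ * u * Complex.I) / (u * Complex.I) ^ 2)
        ((1 - ξ : ℂ) * Complex.exp (ξ * u * Complex.I)) ξ := by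
      intro ξ
      have h := (((hasDerivAt_id (ξ : ℂ)).const_sub 1).mul
        ((hexp ξ).div_const (u * Complex.I))).add ((hexp ξ).div_const ((u * Complex.I) ^ 2))
      convert! h.comp_ofReal using 1
      simp only [id]
      field_simp
      ring
    rw [intervalIntegral.integral_eq_sub_of_hasDerivAt (fun ξ _ => h1 ξ)
      (Continuous.intervalIntegrable (by fun_prop) _ _),
      intervalIntegral.integral_eq_sub_of_hasDerivAt (fun ξ _ => h2 ξ)
      (Continuous.intervalIntegrable (by fun_prop) _ _), fejer_eq hu]
    push_cast
    rw [Complex.cos]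
    field_simp
    simp only [Complex.I_sq]
    simp
    ring_nf

lemma integral_fejer_mul_cexp (t : ℝ) :
    ∫ u : ℝ, (fejer u : ℂ) * Complex.exp (t * u * Complex.I) = 2 * Real.pi * triangle t := by
  have hF : FourierTransform.fourier (fun ξ : ℝ => (triangle ξ : ℂ))
      = fun v => ((fejer (v * (-2 * Real.pi)) : ℝ) : ℂ) := by
    ext v
    rw [← integral_triangle_mul_cexp, Real.fourier_eq']
    refine integral_congr_ae (Eventually.of_forall fun ξ => ?_)
    simp only [smul_eq_mul, RCLike.inner_apply, conj_trivial]
    rw [mul_comm]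
    congr 2
    push_cast; ring
  have hpi : (-2 * Real.pi) ≠ 0 := by simp [Real.pi_ne_zero]
  have hinv := Continuous.fourierInv_fourier_eq (f := fun ξ : ℝ => (triangle ξ : ℂ))
    (Complex.continuous_ofReal.comp continuous_triangle) integrable_triangle.ofReal
    (by rw [hF]; exact (integrable_fejer.comp_mul_right' hpi).ofReal)
  have h := congrFun hinv (-t)
  rw [hF, Real.fourierInv_eq'] at h
  simp only [smul_eq_mul, RCLike.inner_apply, conj_trivial, triangle_neg] at h
  have hsub := Measure.integral_comp_mul_right
    (fun u : ℝ => (fejer u : ℂ) * Complex.exp (t * u * Complex.I)) (-2 * Real.pi)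
  have heq : ∫ v : ℝ, (fejer (v * (-2 * Real.pi)) : ℂ)
      * Complex.exp (t * ((v * (-2 * Real.pi) : ℝ) : ℂ) * Complex.I) = triangle t := by
    rw [← h]
    refine integral_congr_ae (Eventually.of_forall fun v => ?_)
    simp only
    rw [mul_comm]
    congr 2
    push_cast; ring
  rw [heq, abs_inv, abs_mul, abs_neg, abs_two, abs_of_pos Real.pi_pos, Complex.real_smul] at hsub
  rw [hsub]
  have h2pi : (2 * Real.pi : ℂ) ≠ 0 := by simp [Real.pi_ne_zero]
  push_cast
  rw [mul_inv_cancel_left₀ h2pi]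

/-- Lévy's convergence theorem for finite measures on the line, evaluated on intervals. -/
lemma tendsto_measureReal_Icc_of_tendsto_charFun {μ : ℕ → Measure ℝ} [∀ n, IsFiniteMeasure (μ n)]
    {μ₀ : Measure ℝ} [IsFiniteMeasure μ₀] [NullSingletonClass μ₀] (hμ₀ : μ₀ ≠ 0)
    (h : ∀ t : ℝ, Tendsto (fun n => charFun (μ n) t) atTop (𝓝 (charFun μ₀ t))) (a c : ℝ) :
    Tendsto (fun n => (μ n).real (Icc a c)) atTop (𝓝 (μ₀.real (Icc a c))) := by
  let ν : ℕ → FiniteMeasure ℝ := fun n => ⟨μ n, inferInstance⟩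
  let ν₀ : FiniteMeasure ℝ := ⟨μ₀, inferInstance⟩
  have hν₀ : ν₀ ≠ 0 := by
    intro h0
    exact hμ₀ (congrArg Subtype.val h0)
  have hmass : Tendsto (fun n => (μ n).real univ) atTop (𝓝 (μ₀.real univ)) := by
    have h0 := h 0
    simp only [charFun_zero] at h0
    simpa [Function.comp_def] using (Complex.continuous_re.tendsto _).comp h0
  have hmass₀ : μ₀.real univ ≠ 0 := by
    simpa [measureReal_def, ENNReal.toReal_eq_zero_iff] using hμ₀
  have hchar : ∀ (ρ : FiniteMeasure ℝ) (t : ℝ), ρ ≠ 0 →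
      charFun (ρ.normalize : Measure ℝ) t
        = (((ρ : Measure ℝ).real univ : ℝ) : ℂ)⁻¹ * charFun (ρ : Measure ℝ) t := by
    intro ρ t hρ
    rw [ρ.toMeasure_normalize_eq_of_nonzero hρ, charFun_apply, charFun_apply]
    rw [integral_smul_nnreal_measure]
    have hm : (ρ.mass : ℝ) = (ρ : Measure ℝ).real univ := rfl
    rw [NNReal.smul_def, NNReal.coe_inv, hm, Complex.real_smul, Complex.ofReal_inv]
  have hne : ∀ᶠ n in atTop, ν n ≠ 0 := by
    filter_upwards [hmass.eventually_ne hmass₀] with n hn h0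
    apply hn
    have : μ n = 0 := congrArg Subtype.val h0
    simp [this]
  have hlim : Tendsto (fun n => (ν n).normalize) atTop (𝓝 ν₀.normalize) := by
    rw [ProbabilityMeasure.tendsto_iff_tendsto_charFun]
    intro t
    rw [hchar ν₀ t hν₀]
    have h1 : Tendsto (fun n => (((μ n).real univ : ℝ) : ℂ)⁻¹ * charFun (μ n) t) atTop
        (𝓝 (((μ₀.real univ : ℝ) : ℂ)⁻¹ * charFun μ₀ t)) :=
      (((Complex.continuous_ofReal.tendsto _).comp hmass).inv₀ (by exact_mod_cast hmass₀)).mul (h t)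
    refine h1.congr' ?_
    filter_upwards [hne] with n hn
    exact (hchar (ν n) t hn).symm
  have hreal : ∀ (ρ : FiniteMeasure ℝ) (s : Set ℝ), ((ρ : Measure ℝ).real s)
      = (ρ : Measure ℝ).real univ * ((ρ.normalize : Measure ℝ) s).toReal := by
    intro ρ s
    exact congrArg NNReal.toReal (ρ.self_eq_mass_mul_normalize s)
  have hport := ProbabilityMeasure.tendsto_measure_of_null_frontier_of_tendsto' hlim
    (E := Icc a c) (by
      rw [ν₀.toMeasure_normalize_eq_of_nonzero hν₀]
      have h2 : μ₀ (frontier (Icc a c)) = 0 := by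
        refine measure_mono_null (t := {a, c}) ?_ (((Set.finite_singleton c).insert a).measure_zero _)
        rcases le_or_gt a c with hac | hac
        · rw [frontier_Icc hac]
        · simp [Icc_eq_empty_of_lt hac]
      have h3 : (ν₀ : Measure ℝ) = μ₀ := rfl
      simp [h3, h2])
  have := hmass.mul ((ENNReal.tendsto_toReal (measure_ne_top _ _)).comp hport)
  rw [show μ₀.real (Icc a c) = _ from hreal ν₀ _]
  exact this.congr fun n => (hreal (ν n) _).symm

lemma rpow_le_two_rpow_mul_rpow {L L' : ℝ} (hL : 0 < L) (h1 : L / 2 ≤ L') (h2 : L' ≤ L) (α : ℝ) :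
    L' ^ α ≤ 2 ^ |α| * L ^ α := by
  have hL' : 0 < L' := by linarith
  rcases le_total 0 α with hα | hα
  · have h3 : L' ^ α ≤ L ^ α := Real.rpow_le_rpow hL'.le h2 hα
    have h4 : (1 : ℝ) ≤ 2 ^ |α| := Real.one_le_rpow one_le_two (abs_nonneg _)
    nlinarith [Real.rpow_pos_of_pos hL α]
  · have h3 : L' ^ α ≤ (L / 2) ^ α := Real.rpow_le_rpow_of_nonpos (by positivity) h1 hα
    rw [Real.div_rpow hL.le zero_le_two] at h3
    rwa [abs_of_nonpos hα, Real.rpow_neg zero_le_two, inv_mul_eq_div]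

lemma gaussian_bound_aux {γ r R : ℝ} (hγ : 0 < γ) (hr : 1 ≤ r) (hrR : r ≤ R) :
    γ / r ≤ γ - γ / (R * (R + 1)) * (r ^ 2 - 1) := by
  have hr0 : 0 < r := by linarith
  have hR0 : 0 < R := by linarith
  have h1 : (r ^ 2 - 1) / (R * (R + 1)) ≤ (r ^ 2 - 1) / (r * (r + 1)) := by
    apply div_le_div_of_nonneg_left (by nlinarith) (by positivity)
    nlinarith
  have h2 : (r ^ 2 - 1) / (r * (r + 1)) = 1 - 1 / r := by field_simp; ring
  have h3 := mul_le_mul_of_nonneg_left (h1.trans_eq h2) hγ.le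
  have e1 : γ / (R * (R + 1)) * (r ^ 2 - 1) = γ * ((r ^ 2 - 1) / (R * (R + 1))) := by ring
  have e2 : γ / r = γ * (1 / r) := by ring
  rw [e1, e2]
  linarith

section

variable {b : ℕ → ℝ} {lam α β γ : ℝ} (hlam : 0 < lam) (hγ : 0 < γ)
  (hangle : ∀ Δ : ℝ, 0 < Δ → ∃ C δ : ℝ, 0 < C ∧ 0 < δ ∧ ∀ z : ℂ, 0 < z.re →
        |z.im| ≤ Δ * z.re → ‖z‖ < δ →
        ‖expSeries b z‖ ≤ C * Real.log (1/‖z‖) ^ α * ‖z‖ ^ β * Real.exp (γ/‖z‖))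

include hlam hγ hangle in
lemma exists_scaledSeries_bound {Δ : ℝ} (hΔ : 0 < Δ) :
    ∃ C κ : ℝ, 0 < C ∧ 0 < κ ∧ ∀ᶠ x : ℝ in 𝓝[>] 0, ∀ w : ℝ, √x * |w| ≤ Δ →
      ‖scaledSeries b lam α β γ x (-(w * Complex.I))‖ ≤ C * Real.exp (-κ * w ^ 2) := by
  obtain ⟨C, δ, hC, hδ, h⟩ := hangle Δ hΔ
  set R : ℝ := √(1 + Δ ^ 2) with hRdef
  have hR1 : 1 ≤ R := Real.one_le_sqrt.2 (by nlinarith)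
  have hR0 : 0 < R := by linarith
  refine ⟨C / lam * 2 ^ |α| * R ^ |β|, γ / (R * (R + 1)), by positivity, by positivity, ?_⟩
  filter_upwards [eventually_mem_Ioo_zero one_pos, eventually_mem_Ioo_zero (div_pos hδ hR0),
    eventually_mem_Ioo_zero (a := 1 / R ^ 2) (by positivity)] with x hx hxδ hxR w hw
  have hx0 := hx.1
  have hL : 0 < Real.log (1 / x) :=
    Real.log_pos (by rw [one_div]; exact (one_lt_inv₀ hx.1).2 hx.2)
  set s := √x * w with hs
  have hsΔ : |s| ≤ Δ := by rwa [hs, abs_mul, abs_of_nonneg (Real.sqrt_nonneg x)]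
  have hs2 : s ^ 2 = x * w ^ 2 := by rw [hs, mul_pow, Real.sq_sqrt hx0.le]
  set r := √(1 + s ^ 2) with hr
  have hr1 : 1 ≤ r := Real.one_le_sqrt.2 (by nlinarith)
  have hr0 : 0 < r := by linarith
  have hrR : r ≤ R := by
    apply Real.sqrt_le_sqrt
    have := sq_le_sq' (abs_le.1 hsΔ).1 (abs_le.1 hsΔ).2
    linarith
  have hr2 : r ^ 2 = 1 + s ^ 2 := Real.sq_sqrt (by positivity)
  set z : ℂ := x * (1 + √x * (-(w * Complex.I))) with hz
  have hzre : z.re = x := by simp [hz]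
  have hzim : z.im = -(x * s) := by simp [hz, hs]
  have hznorm : ‖z‖ = x * r := by
    rw [← sq_eq_sq₀ (norm_nonneg _) (by positivity), Complex.sq_norm, Complex.normSq_apply, hzre,
      hzim, mul_pow, hr2]
    ring
  have hbound := h z (by rw [hzre]; exact hx0)
    (by
      rw [hzim, hzre, abs_neg, abs_mul, abs_of_pos hx0, mul_comm]
      exact mul_le_mul_of_nonneg_right hsΔ hx0.le)
    (by
      rw [hznorm]
      calc x * r ≤ x * R := by gcongr
        _ < δ := (lt_div_iff₀ hR0).1 hxδ.2)
  rw [hznorm] at hbound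
  have hlog : Real.log (1 / (x * r)) = Real.log (1 / x) - Real.log r := by
    rw [one_div, one_div, Real.log_inv, Real.log_inv, Real.log_mul hx0.ne' hr0.ne']
    ring
  have hlogr : Real.log r ≤ Real.log (1 / x) / 2 := by
    have h1 : Real.log r ≤ Real.log R := Real.log_le_log hr0 hrR
    have h2 : Real.log (R ^ 2) ≤ Real.log (1 / x) := by
      apply Real.log_le_log (by positivity)
      rw [le_div_iff₀ hx0, mul_comm]
      exact ((lt_div_iff₀ (by positivity)).1 hxR.2).le
    rw [Real.log_pow] at h2
    push_cast at h2
    linarith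
  have b1 : Real.log (1 / (x * r)) ^ α ≤ 2 ^ |α| * Real.log (1 / x) ^ α :=
    rpow_le_two_rpow_mul_rpow hL (by rw [hlog]; linarith)
      (by rw [hlog]; linarith [Real.log_nonneg hr1]) α
  have b2 : (x * r) ^ β ≤ x ^ β * R ^ |β| := by
    rw [Real.mul_rpow hx0.le hr0.le]
    gcongr
    exact (Real.rpow_le_rpow_of_exponent_le hr1 (le_abs_self β)).trans
      (Real.rpow_le_rpow hr0.le hrR (abs_nonneg β))
  have b3 : Real.exp (γ / (x * r)) ≤ Real.exp (γ / x) * Real.exp (-(γ / (R * (R + 1))) * w ^ 2) := by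
    rw [← Real.exp_add, Real.exp_le_exp]
    have h1 := gaussian_bound_aux hγ hr1 hrR
    rw [hr2, add_sub_cancel_left, hs2] at h1
    have h2 := div_le_div_of_nonneg_right h1 hx0.le
    have e1 : γ / (x * r) = γ / r / x := by rw [div_div, mul_comm]
    rw [e1]
    refine h2.trans_eq ?_
    field_simp
    ring
  have hg := growth_pos (α := α) (β := β) (γ := γ) hlam hx0 hx.2
  have hexp : ‖Complex.exp (γ * -(w * Complex.I) / √x)‖ = 1 := by
    rw [Complex.norm_exp, Complex.div_ofReal_re]
    simp
  rw [scaledSeries, norm_div, norm_mul, hexp, one_mul, Complex.norm_real, Real.norm_of_nonneg hg.le,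
    div_le_iff₀ hg]
  refine hbound.trans ?_
  have hpos : 0 ≤ Real.log (1 / (x * r)) := by rw [hlog]; linarith
  calc C * Real.log (1 / (x * r)) ^ α * (x * r) ^ β * Real.exp (γ / (x * r))
      ≤ C * (2 ^ |α| * Real.log (1 / x) ^ α) * (x ^ β * R ^ |β|) *
        (Real.exp (γ / x) * Real.exp (-(γ / (R * (R + 1))) * w ^ 2)) := by gcongr
    _ = _ := by rw [growth]; field_simp

variable (hb : ∀ n, 0 ≤ b n)
  (hradius : ∀ q : ℝ, |q| < 1 → Summable (fun n : ℕ => b n * q ^ n))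
  (hreal : Tendsto (fun t : ℝ => (∑' n : ℕ, b n * Real.exp (-t * n)) / growth lam α β γ t)
    (𝓝[>] (0:ℝ)) (𝓝 1))

include hb hradius in
lemma continuous_scaledSeries_imag {x : ℝ} (hx : 0 < x) :
    Continuous fun w : ℝ => scaledSeries b lam α β γ x (-(w * Complex.I)) := by
  unfold scaledSeries
  refine Continuous.div_const (Continuous.mul (by fun_prop) ?_) _
  refine (differentiableOn_expSeries hb hradius).continuousOn.comp_continuous (by fun_prop)
    fun w => ?_
  change 0 < (_ : ℂ).re
  rw [re_scaled_arg]
  simpa using hx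

include hlam hγ hangle hb hradius hreal in
lemma tendsto_integral_triangle_mul_scaledSeries (t : ℝ) :
    Tendsto (fun x : ℝ => ∫ w : ℝ, (triangle (√x * w - t) : ℂ) *
      scaledSeries b lam α β γ x (-(w * Complex.I))) (𝓝[>] 0)
      (𝓝 (triangle t * √(Real.pi / γ))) := by
  obtain ⟨C, κ, hC, hκ, hbd⟩ := exists_scaledSeries_bound hlam hγ hangle
    (Δ := |t| + 1) (by positivity)
  have hlim : (triangle t * √(Real.pi / γ) : ℂ)
      = ∫ w : ℝ, (triangle t : ℂ) * Complex.exp (γ * (-(w * Complex.I)) ^ 2) := by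
    rw [integral_const_mul, ← integral_gaussian, ← integral_complex_ofReal]
    congr 2
    ext w
    push_cast
    congr 1
    rw [neg_sq, mul_pow, Complex.I_sq]
    ring
  rw [hlim]
  refine tendsto_integral_filter_of_dominated_convergence (fun w => C * Real.exp (-κ * w ^ 2))
    ?_ ?_ ((integrable_exp_neg_mul_sq hκ).const_mul C) ?_
  · filter_upwards [self_mem_nhdsWithin] with x hx
    have h1 := continuous_triangle
    have h2 := continuous_scaledSeries_imag (lam := lam) (α := α) (β := β) (γ := γ) hb hradius hx
    exact Continuous.aestronglyMeasurable (Continuous.mul (by fun_prop) h2)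
  · filter_upwards [hbd] with x hx
    refine Eventually.of_forall fun w => ?_
    rw [norm_mul, Complex.norm_real, Real.norm_of_nonneg (triangle_nonneg _)]
    by_cases hw : √x * |w| ≤ |t| + 1
    · exact (mul_le_of_le_one_left (norm_nonneg _) (triangle_le_one _)).trans (hx w hw)
    · have : 1 ≤ |√x * w - t| := by
        have h1 := abs_sub_abs_le_abs_sub (√x * w) t
        rw [abs_mul, abs_of_nonneg (Real.sqrt_nonneg x)] at h1
        linarith
      rw [triangle_eq_zero this, zero_mul]
      positivity
  · refine Eventually.of_forall fun w => ?_
    refine Tendsto.mul ?_ (tendsto_scaledSeries hb hradius hlam hreal _)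
    have h1 := continuous_triangle
    have h2 : Continuous fun x : ℝ => (triangle (√x * w - t) : ℂ) := by fun_prop
    have h3 := (h2.tendsto 0).mono_left (nhdsWithin_le_nhds (s := Ioi 0))
    simpa [triangle_neg] using h3

end

/-- The discrete measure with weights `b_k e^{-xk}`, suitably normalised, at the points
`kx - γ/x`, multiplied by the Fejér kernel. -/
noncomputable def fejerMeasure (b : ℕ → ℝ) (lam α β γ x : ℝ) : Measure ℝ :=
  Measure.sum fun k : ℕ => ENNReal.ofReal (b k * Real.exp (-x * k) / (growth lam α β γ x * √x) *
    fejer (x * k - γ / x)) • Measure.dirac (x * k - γ / x)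

/-- The Lebesgue measure with density a multiple of the Fejér kernel. -/
noncomputable def fejerLimit (c : ℝ) : Measure ℝ :=
  volume.withDensity fun u => ENNReal.ofReal (c * fejer u)

section

variable {b : ℕ → ℝ} {lam α β γ : ℝ} (hlam : 0 < lam) (hb : ∀ n, 0 ≤ b n)
  (hradius : ∀ q : ℝ, |q| < 1 → Summable (fun n : ℕ => b n * q ^ n))

include hlam hb in
lemma fejerMeasure_weight_nonneg {x : ℝ} (hx : x ∈ Ioo (0 : ℝ) 1) (k : ℕ) :
    0 ≤ b k * Real.exp (-x * k) / (growth lam α β γ x * √x) * fejer (x * k - γ / x) := by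
  have := growth_pos (α := α) (β := β) (γ := γ) hlam hx.1 hx.2
  have := hb k
  have := fejer_nonneg (x * k - γ / x)
  positivity

include hlam hb hradius in
lemma summable_fejerMeasure_weight {x : ℝ} (hx : x ∈ Ioo (0 : ℝ) 1) :
    Summable fun k : ℕ =>
      b k * Real.exp (-x * k) / (growth lam α β γ x * √x) * fejer (x * k - γ / x) := by
  have hg := growth_pos (α := α) (β := β) (γ := γ) hlam hx.1 hx.2
  refine Summable.of_nonneg_of_le (fejerMeasure_weight_nonneg hlam hb hx) (fun k => ?_)
    ((summable_mul_exp hradius hx.1).div_const (growth lam α β γ x * √x))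
  refine mul_le_of_le_one_right ?_ (fejer_le_one _)
  have := hb k
  positivity

include hlam hb hradius in
lemma isFiniteMeasure_fejerMeasure {x : ℝ} (hx : x ∈ Ioo (0 : ℝ) 1) :
    IsFiniteMeasure (fejerMeasure b lam α β γ x) := by
  refine ⟨?_⟩
  rw [fejerMeasure, Measure.sum_apply _ MeasurableSet.univ]
  simp only [Measure.smul_apply, measure_univ, smul_eq_mul, mul_one]
  exact (summable_fejerMeasure_weight hlam hb hradius hx).tsum_ofReal_lt_top

include hlam hb hradius in
lemma hasSum_fejerMeasure_real {x : ℝ} (hx : x ∈ Ioo (0 : ℝ) 1) {s : Set ℝ}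
    (hs : MeasurableSet s) :
    HasSum (fun k : ℕ => b k * Real.exp (-x * k) / (growth lam α β γ x * √x) *
      fejer (x * k - γ / x) * s.indicator 1 (x * k - γ / x))
      ((fejerMeasure b lam α β γ x).real s) := by
  have hw := fejerMeasure_weight_nonneg (α := α) (β := β) (γ := γ) hlam hb hx
  rw [← integral_indicator_one hs]
  have h := hasSum_integral_sum_dirac (f := s.indicator (1 : ℝ → ℝ))
    (x := fun k : ℕ => x * k - γ / x)
    (c := fun k : ℕ => ENNReal.ofReal (b k * Real.exp (-x * k) / (growth lam α β γ x * √x) *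
      fejer (x * k - γ / x))) (fun k => ENNReal.ofReal_ne_top) (by
      simp only [ENNReal.toReal_ofReal (hw _)]
      refine Summable.of_nonneg_of_le (fun k => mul_nonneg (hw k) (norm_nonneg _)) (fun k => ?_)
        (summable_fejerMeasure_weight (α := α) (β := β) (γ := γ) hlam hb hradius hx)
      refine mul_le_of_le_one_right (hw k) ?_
      by_cases hk : x * k - γ / x ∈ s <;> simp [hk])
  simp only [ENNReal.toReal_ofReal (hw _), smul_eq_mul] at h
  exact h

include hlam hb hradius in
lemma charFun_fejerMeasure {x : ℝ} (hx : x ∈ Ioo (0 : ℝ) 1) (t : ℝ) :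
    charFun (fejerMeasure b lam α β γ x) t = ∫ w : ℝ, (triangle (√x * w - t) : ℂ) *
      scaledSeries b lam α β γ x (-(w * Complex.I)) := by
  have hw := fejerMeasure_weight_nonneg (α := α) (β := β) (γ := γ) hlam hb hx
  have hg := growth_pos (α := α) (β := β) (γ := γ) hlam hx.1 hx.2
  have hsx : 0 < √x := Real.sqrt_pos.2 hx.1
  have hxx : √x * √x = x := Real.mul_self_sqrt hx.1.le
  set p : ℕ → ℝ := fun k => b k * Real.exp (-x * k) / (growth lam α β γ x * √x) with hp
  have hp0 : ∀ k, 0 ≤ p k := fun k => by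
    have := hb k
    simp only [hp]; positivity
  have hpsum : Summable p := (summable_mul_exp hradius hx.1).div_const _
  set Φ : ℝ → ℂ := fun s => ∑' k : ℕ, (p k : ℂ) *
    Complex.exp (s * ((x * k - γ / x : ℝ) : ℂ) * Complex.I) with hΦ
  have hΦs : ∀ w : ℝ, Φ (√x * w) = scaledSeries b lam α β γ x (-(w * Complex.I)) / √x := by
    intro w
    rw [scaledSeries, expSeries, ← tsum_mul_left, ← tsum_div_const, ← tsum_div_const]
    refine tsum_congr fun k => ?_
    simp only [hp]
    have hg' : (growth lam α β γ x : ℂ) ≠ 0 := by exact_mod_cast hg.ne'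
    have hs' : ((√x : ℝ) : ℂ) ≠ 0 := by exact_mod_cast hsx.ne'
    have hexp : Complex.exp (-x * k) * Complex.exp (((√x * w : ℝ) : ℂ) *
        ((x * k - γ / x : ℝ) : ℂ) * Complex.I) = Complex.exp (γ * -(w * Complex.I) / √x) *
        Complex.exp (-(x * (1 + √x * -(w * Complex.I))) * k) := by
      rw [← Complex.exp_add, ← Complex.exp_add]
      congr 1
      have hxc : (x : ℂ) = √x * √x := by exact_mod_cast hxx.symm
      push_cast
      have e : (√x : ℂ) * (γ / x) = γ / √x := by
        rw [hxc]; field_simp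
      linear_combination (-(w : ℂ) * Complex.I) * e
    push_cast at hexp ⊢
    linear_combination (b k / (growth lam α β γ x * √x) : ℂ) * hexp
  rw [charFun_apply_real, fejerMeasure, integral_sum_dirac (fun k => ENNReal.ofReal_ne_top)]
  simp only [ENNReal.toReal_ofReal (hw _)]
  have hterm : ∀ k : ℕ, (p k * fejer (x * k - γ / x)) •
      Complex.exp (t * ((x * k - γ / x : ℝ) : ℂ) * Complex.I) = ∫ ξ : ℝ, (triangle ξ : ℂ) *
      ((p k : ℂ) * Complex.exp (((ξ + t : ℝ) : ℂ) * ((x * k - γ / x : ℝ) : ℂ) * Complex.I)) := by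
    intro k
    rw [Complex.real_smul, Complex.ofReal_mul, ← integral_triangle_mul_cexp, ← integral_const_mul,
      ← integral_mul_const]
    refine integral_congr_ae (Eventually.of_forall fun ξ => ?_)
    simp only
    rw [Complex.ofReal_add, add_mul, add_mul, Complex.exp_add]
    ring
  have hnorm : ∀ (k : ℕ) (ξ : ℝ), ‖(triangle ξ : ℂ) *
      ((p k : ℂ) * Complex.exp (((ξ + t : ℝ) : ℂ) * ((x * k - γ / x : ℝ) : ℂ) * Complex.I))‖
      = triangle ξ * p k := by
    intro k ξ
    rw [norm_mul, norm_mul, ← Complex.ofReal_mul, Complex.norm_exp_ofReal_mul_I, mul_one,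
      Complex.norm_real, Complex.norm_real, Real.norm_of_nonneg (triangle_nonneg _),
      Real.norm_of_nonneg (hp0 k)]
  have hct := continuous_triangle
  calc ∑' k : ℕ, (p k * fejer (x * k - γ / x)) •
        Complex.exp (t * ((x * k - γ / x : ℝ) : ℂ) * Complex.I)
      = ∑' k : ℕ, ∫ ξ : ℝ, (triangle ξ : ℂ) * ((p k : ℂ) *
          Complex.exp (((ξ + t : ℝ) : ℂ) * ((x * k - γ / x : ℝ) : ℂ) * Complex.I)) :=
        tsum_congr hterm
    _ = ∫ ξ : ℝ, ∑' k : ℕ, (triangle ξ : ℂ) * ((p k : ℂ) *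
          Complex.exp (((ξ + t : ℝ) : ℂ) * ((x * k - γ / x : ℝ) : ℂ) * Complex.I)) := by
        refine integral_tsum_of_summable_integral_norm (fun k => ?_) ?_
        · refine (integrable_triangle.mul_const (p k)).mono'
            (Continuous.aestronglyMeasurable (by fun_prop))
            (Eventually.of_forall fun ξ => (hnorm k ξ).le)
        · simp only [hnorm, integral_mul_const]
          exact hpsum.mul_left _
    _ = ∫ ξ : ℝ, (triangle (ξ + t - t) : ℂ) * Φ (ξ + t) := by
        refine integral_congr_ae (Eventually.of_forall fun ξ => ?_)
        simp only [hΦ, tsum_mul_left, add_sub_cancel_right]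
    _ = ∫ s : ℝ, (triangle (s - t) : ℂ) * Φ s :=
        integral_add_right_eq_self (fun s => (triangle (s - t) : ℂ) * Φ s) t
    _ = √x • ∫ w : ℝ, (triangle (√x * w - t) : ℂ) * Φ (√x * w) := by
        rw [Measure.integral_comp_mul_left (fun s => (triangle (s - t) : ℂ) * Φ s), abs_inv,
          abs_of_pos hsx, smul_inv_smul₀ hsx.ne']
    _ = _ := by
        rw [Complex.real_smul, ← integral_const_mul]
        refine integral_congr_ae (Eventually.of_forall fun w => ?_)
        have hs' : ((√x : ℝ) : ℂ) ≠ 0 := by exact_mod_cast hsx.ne'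
        simp only [hΦs]
        field_simp

end

lemma isFiniteMeasure_fejerLimit (c : ℝ) : IsFiniteMeasure (fejerLimit c) :=
  isFiniteMeasure_withDensity_ofReal (integrable_fejer.const_mul c).2

lemma fejerLimit_real {c : ℝ} (hc : 0 ≤ c) {s : Set ℝ} (hs : MeasurableSet s) :
    (fejerLimit c).real s = ∫ u in s, c * fejer u := by
  rw [measureReal_def, fejerLimit, withDensity_apply _ hs, integral_eq_lintegral_of_nonneg_ae
    (Eventually.of_forall fun u => mul_nonneg hc (fejer_nonneg u))
    (integrable_fejer.const_mul c).1.restrict]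

lemma charFun_fejerLimit {c : ℝ} (hc : 0 ≤ c) (t : ℝ) :
    charFun (fejerLimit c) t = c * (2 * Real.pi * triangle t) := by
  rw [charFun_apply_real, fejerLimit, integral_withDensity_eq_integral_toReal_smul
    (by have := continuous_fejer; fun_prop) (Eventually.of_forall fun u => ENNReal.ofReal_lt_top),
    ← integral_fejer_mul_cexp, ← integral_const_mul]
  refine integral_congr_ae (Eventually.of_forall fun u => ?_)
  simp only
  rw [ENNReal.toReal_ofReal (mul_nonneg hc (fejer_nonneg u)), Complex.real_smul]
  push_cast
  ring

section

variable {b : ℕ → ℝ} {lam α β γ : ℝ} (hlam : 0 < lam) (hγ : 0 < γ) (hb : ∀ n, 0 ≤ b n)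
  (hradius : ∀ q : ℝ, |q| < 1 → Summable (fun n : ℕ => b n * q ^ n))
  (hreal : Tendsto (fun t : ℝ => (∑' n : ℕ, b n * Real.exp (-t * n)) / growth lam α β γ t)
    (𝓝[>] (0:ℝ)) (𝓝 1))
  (hangle : ∀ Δ : ℝ, 0 < Δ → ∃ C δ : ℝ, 0 < C ∧ 0 < δ ∧ ∀ z : ℂ, 0 < z.re →
        |z.im| ≤ Δ * z.re → ‖z‖ < δ →
        ‖expSeries b z‖ ≤ C * Real.log (1/‖z‖) ^ α * ‖z‖ ^ β * Real.exp (γ/‖z‖))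

include hlam hγ hb hradius hreal hangle in
lemma tendsto_fejerMeasure_Icc {x : ℕ → ℝ} (hx : ∀ n, x n ∈ Ioo (0 : ℝ) 1)
    (hx0 : Tendsto x atTop (𝓝 0)) (a d : ℝ) :
    Tendsto (fun n => (fejerMeasure b lam α β γ (x n)).real (Icc a d)) atTop
      (𝓝 ((fejerLimit (√(Real.pi / γ) / (2 * Real.pi))).real (Icc a d))) := by
  have hc : 0 < √(Real.pi / γ) / (2 * Real.pi) := by have := Real.pi_pos; positivity
  set c := √(Real.pi / γ) / (2 * Real.pi) with hcdef
  have := isFiniteMeasure_fejerLimit c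
  have : ∀ n, IsFiniteMeasure (fejerMeasure b lam α β γ (x n)) :=
    fun n => isFiniteMeasure_fejerMeasure hlam hb hradius (hx n)
  have : NullSingletonClass (fejerLimit c) := by unfold fejerLimit; infer_instance
  have hchar : ∀ t, charFun (fejerLimit c) t = triangle t * √(Real.pi / γ) := by
    intro t
    have hpi : (Real.pi : ℂ) ≠ 0 := by exact_mod_cast Real.pi_ne_zero
    rw [charFun_fejerLimit hc.le, hcdef]
    push_cast
    field_simp
  refine tendsto_measureReal_Icc_of_tendsto_charFun ?_ (fun t => ?_) a d
  · intro h0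
    have h1 := hchar 0
    rw [h0, triangle_zero] at h1
    have : 0 < √(Real.pi / γ) := by have := Real.pi_pos; positivity
    simp only [charFun_zero_measure, Complex.ofReal_one, one_mul] at h1
    exact this.ne (by exact_mod_cast h1)
  · rw [hchar]
    have hx' : Tendsto x atTop (𝓝[>] 0) :=
      tendsto_nhdsWithin_iff.2 ⟨hx0, Eventually.of_forall fun n => (hx n).1⟩
    exact ((tendsto_integral_triangle_mul_scaledSeries hlam hγ hangle hb hradius hreal t).comp
      hx').congr fun n => (charFun_fejerMeasure hlam hb hradius (hx n) t).symm

end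

section

variable {b : ℕ → ℝ} {lam α β γ : ℝ} (hlam : 0 < lam) (hb : ∀ n, 0 ≤ b n) (hmono : Monotone b)
  (hradius : ∀ q : ℝ, |q| < 1 → Summable (fun n : ℕ => b n * q ^ n))

include hlam hb hmono hradius in
lemma mul_coeff_le_fejerMeasure_real {x : ℝ} (hx : x ∈ Ioo (0 : ℝ) 1) {n : ℕ} (hn : x * n = γ / x)
    {η m : ℝ} (hη : 0 ≤ η) (hm : 0 ≤ m) (hmη : ∀ u ∈ Icc 0 η, m ≤ fejer u) :
    η * Real.exp (-η) * m * (b n * Real.exp (-x * n) / (growth lam α β γ x * √x * x)) ≤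
      (fejerMeasure b lam α β γ x).real (Icc 0 η) := by
  have hg := growth_pos (α := α) (β := β) (γ := γ) hlam hx.1 hx.2
  have hw := fejerMeasure_weight_nonneg (α := α) (β := β) (γ := γ) hlam hb hx
  have hsx : 0 < √x := Real.sqrt_pos.2 hx.1
  have hx0 := hx.1
  have hbn := hb n
  set J := ⌊η / x⌋₊ with hJ
  have hsum := sum_le_hasSum (Finset.Ico n (n + (J + 1))) (fun k _ =>
      mul_nonneg (hw k) (indicator_nonneg (fun _ _ => zero_le_one) _))
    (hasSum_fejerMeasure_real hlam hb hradius hx (measurableSet_Icc (a := (0 : ℝ)) (b := η)))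
  refine le_trans ?_ hsum
  have hterm : ∀ k ∈ Finset.Ico n (n + (J + 1)),
      b n * Real.exp (-x * n) / (growth lam α β γ x * √x) * (Real.exp (-η) * m) ≤
      b k * Real.exp (-x * k) / (growth lam α β γ x * √x) * fejer (x * k - γ / x) *
        (Icc 0 η).indicator 1 (x * k - γ / x) := by
    intro k hk
    rw [Finset.mem_Ico] at hk
    have hkn : (n : ℝ) ≤ k := by exact_mod_cast hk.1
    have hkJ : (k : ℝ) - n ≤ J := by
      rw [sub_le_iff_le_add]
      exact_mod_cast (by omega : k ≤ J + n)
    have hle : (k : ℝ) - n ≤ η / x := hkJ.trans (Nat.floor_le (by positivity))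
    rw [le_div_iff₀ hx0] at hle
    have hmem : x * k - γ / x ∈ Icc 0 η := by
      rw [← hn]
      constructor <;> nlinarith
    rw [indicator_of_mem hmem, Pi.one_apply, mul_one]
    have hbk := hmono hk.1
    have hexp : Real.exp (-x * n) * Real.exp (-η) ≤ Real.exp (-x * k) := by
      rw [← Real.exp_add]
      exact Real.exp_le_exp.2 (by linarith)
    calc b n * Real.exp (-x * n) / (growth lam α β γ x * √x) * (Real.exp (-η) * m)
        = b n * (Real.exp (-x * n) * Real.exp (-η)) / (growth lam α β γ x * √x) * m := by ring
      _ ≤ _ := by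
        have := hmη _ hmem
        have := hb k
        gcongr
  have hcard := Finset.card_nsmul_le_sum _ _ _ hterm
  refine le_trans ?_ hcard
  rw [Nat.card_Ico, add_tsub_cancel_left, nsmul_eq_mul]
  have hJη : η / x ≤ ((J + 1 : ℕ) : ℝ) := by push_cast; exact (Nat.lt_floor_add_one _).le
  calc η * Real.exp (-η) * m * (b n * Real.exp (-x * n) / (growth lam α β γ x * √x * x))
      = η / x * (b n * Real.exp (-x * n) / (growth lam α β γ x * √x) * (Real.exp (-η) * m)) := by
        field_simp
    _ ≤ _ := by gcongr

include hlam hb hmono hradius in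
lemma fejerMeasure_real_le_mul_coeff {x : ℝ} (hx : x ∈ Ioo (0 : ℝ) 1) {n : ℕ} (hn : x * n = γ / x)
    {η : ℝ} (hη : 0 ≤ η) :
    (fejerMeasure b lam α β γ x).real (Icc (-η) 0) ≤ (η + x) * Real.exp η *
      (b n * Real.exp (-x * n) / (growth lam α β γ x * √x * x)) := by
  have hg := growth_pos (α := α) (β := β) (γ := γ) hlam hx.1 hx.2
  have hsx : 0 < √x := Real.sqrt_pos.2 hx.1
  have hx0 := hx.1
  have hbn := hb n
  set J := ⌊η / x⌋₊ with hJ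
  have hmem : ∀ k : ℕ, x * k - γ / x ∈ Icc (-η) 0 → k ∈ Finset.Icc (n - J) n := by
    intro k hk
    rw [← hn] at hk
    have hkn : (k : ℝ) ≤ n := by
      by_contra! h
      nlinarith [hk.2]
    have hkn' : k ≤ n := by exact_mod_cast hkn
    have h : n - k ≤ J := Nat.le_floor (by
      rw [le_div_iff₀ hx0, Nat.cast_sub hkn']
      linarith [hk.1])
    rw [Finset.mem_Icc]
    omega
  have hsum := hasSum_fejerMeasure_real (α := α) (β := β) (γ := γ) hlam hb hradius hx
    (measurableSet_Icc (a := -η) (b := 0))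
  rw [hsum.unique (hasSum_sum_of_ne_finset_zero (s := Finset.Icc (n - J) n) fun k hk => by
    rw [indicator_of_notMem (fun h => hk (hmem k h)), mul_zero])]
  have hterm : ∀ k ∈ Finset.Icc (n - J) n,
      b k * Real.exp (-x * k) / (growth lam α β γ x * √x) * fejer (x * k - γ / x) *
        (Icc (-η) 0).indicator 1 (x * k - γ / x) ≤
      b n * Real.exp (-x * n) / (growth lam α β γ x * √x) * Real.exp η := by
    intro k hk
    by_cases hkη : x * k - γ / x ∈ Icc (-η) 0
    · rw [indicator_of_mem hkη, Pi.one_apply, mul_one]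
      rw [← hn] at hkη
      have hbk := hmono (Finset.mem_Icc.1 hk).2
      have hbk0 := hb k
      have hexp : Real.exp (-x * k) ≤ Real.exp (-x * n) * Real.exp η := by
        rw [← Real.exp_add]
        exact Real.exp_le_exp.2 (by linarith [hkη.1])
      calc b k * Real.exp (-x * k) / (growth lam α β γ x * √x) * fejer (x * k - γ / x)
          ≤ b k * Real.exp (-x * k) / (growth lam α β γ x * √x) :=
            mul_le_of_le_one_right (by positivity) (fejer_le_one _)
        _ ≤ b n * (Real.exp (-x * n) * Real.exp η) / (growth lam α β γ x * √x) := by gcongr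
        _ = _ := by ring
    · rw [indicator_of_notMem hkη, mul_zero]
      positivity
  refine (Finset.sum_le_card_nsmul _ _ _ hterm).trans ?_
  rw [Nat.card_Icc, nsmul_eq_mul]
  have hcard : ((n + 1 - (n - J) : ℕ) : ℝ) ≤ η / x + 1 := by
    have h : (J : ℝ) ≤ η / x := Nat.floor_le (by positivity)
    have h' : ((n + 1 - (n - J) : ℕ) : ℝ) ≤ J + 1 := by exact_mod_cast (by omega)
    linarith
  calc _ ≤ (η / x + 1) * (b n * Real.exp (-x * n) / (growth lam α β γ x * √x) * Real.exp η) := by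
        gcongr
    _ = _ := by field_simp

end

lemma fejerLimit_real_Icc_le {c : ℝ} (hc : 0 ≤ c) {η : ℝ} (hη : 0 ≤ η) :
    (fejerLimit c).real (Icc 0 η) ≤ c * η := by
  rw [fejerLimit_real hc measurableSet_Icc]
  calc ∫ u in Icc 0 η, c * fejer u ≤ ∫ u in Icc 0 η, c :=
        setIntegral_mono_on (integrable_fejer.const_mul c).integrableOn
          (by simp) measurableSet_Icc
          fun u _ => mul_le_of_le_one_right hc (fejer_le_one u)
    _ = c * η := by simp [hη, mul_comm]

lemma mul_le_fejerLimit_real_Icc {c : ℝ} (hc : 0 ≤ c) {η m : ℝ} (hη : 0 ≤ η)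
    (hmη : ∀ u ∈ Icc (-η) 0, m ≤ fejer u) :
    c * m * η ≤ (fejerLimit c).real (Icc (-η) 0) := by
  rw [fejerLimit_real hc measurableSet_Icc]
  calc c * m * η = ∫ u in Icc (-η) 0, c * m := by simp [hη, mul_comm]
    _ ≤ ∫ u in Icc (-η) 0, c * fejer u :=
        setIntegral_mono_on (integrableOn_const measure_Icc_lt_top.ne)
          (integrable_fejer.const_mul c).integrableOn measurableSet_Icc
          fun u hu => mul_le_mul_of_nonneg_left (hmη u hu) hc

lemma exists_pos_forall_le_fejer {m : ℝ} (hm : m < 1) :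
    ∃ η : ℝ, 0 < η ∧ (∀ u ∈ Icc (-η) η, m ≤ fejer u) ∧ m ≤ Real.exp (-η) := by
  have h1 : ∀ᶠ u in 𝓝 (0 : ℝ), m < fejer u :=
    (continuous_fejer.tendsto' 0 1 fejer_zero).eventually_const_lt hm
  have h2 : ∀ᶠ u in 𝓝 (0 : ℝ), m < Real.exp (-u) :=
    (Continuous.tendsto' (by fun_prop) _ _ (by simp)).eventually_const_lt hm
  obtain ⟨ε, hε, h⟩ := Metric.eventually_nhds_iff.1 (h1.and h2)
  refine ⟨ε / 2, by positivity, fun u hu => (h ?_).1.le, (h ?_).2.le⟩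
  · rw [Real.dist_0_eq_abs]
    exact (abs_le.2 hu).trans_lt (by linarith)
  · rw [Real.dist_0_eq_abs, abs_of_pos (by positivity)]
    linarith

section

variable {b : ℕ → ℝ} {lam α β γ : ℝ} (hlam : 0 < lam) (hγ : 0 < γ) (hb : ∀ n, 0 ≤ b n)
  (hmono : Monotone b)
  (hradius : ∀ q : ℝ, |q| < 1 → Summable (fun n : ℕ => b n * q ^ n))
  (hreal : Tendsto (fun t : ℝ => (∑' n : ℕ, b n * Real.exp (-t * n)) / growth lam α β γ t)
    (𝓝[>] (0:ℝ)) (𝓝 1))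
  (hangle : ∀ Δ : ℝ, 0 < Δ → ∃ C δ : ℝ, 0 < C ∧ 0 < δ ∧ ∀ z : ℂ, 0 < z.re →
        |z.im| ≤ Δ * z.re → ‖z‖ < δ →
        ‖expSeries b z‖ ≤ C * Real.log (1/‖z‖) ^ α * ‖z‖ ^ β * Real.exp (γ/‖z‖))

include hlam hγ hb hmono hradius hreal hangle in
lemma tendsto_normalized_coeff {x : ℕ → ℝ} (hx : ∀ n, x n ∈ Ioo (0 : ℝ) 1)
    (hx0 : Tendsto x atTop (𝓝 0)) {N : ℕ → ℕ} (hN : ∀ n, x n * N n = γ / x n) :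
    Tendsto (fun n => b (N n) * Real.exp (-x n * N n) / (growth lam α β γ (x n) * √(x n) * x n))
      atTop (𝓝 (√(Real.pi / γ) / (2 * Real.pi))) := by
  have hc : 0 < √(Real.pi / γ) / (2 * Real.pi) := by have := Real.pi_pos; positivity
  have hlim := tendsto_fejerMeasure_Icc hlam hγ hb hradius hreal hangle hx hx0
  set c := √(Real.pi / γ) / (2 * Real.pi)
  refine tendsto_order.2 ⟨fun a' ha' => ?_, fun a' ha' => ?_⟩
  · obtain ⟨m, hm, hm0, hm1⟩ : ∃ m, a' < c * m * m ∧ 0 < m ∧ m < 1 := by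
      have h : ∀ᶠ m in 𝓝[<] (1 : ℝ), a' < c * m * m :=
        ((Continuous.tendsto' (by fun_prop) 1 c (by simp)).eventually_const_lt
          ha').filter_mono nhdsWithin_le_nhds
      exact (h.and (Ioo_mem_nhdsLT zero_lt_one)).exists
    obtain ⟨η, hη, hmη, hme⟩ := exists_pos_forall_le_fejer hm1
    have hL := mul_le_fejerLimit_real_Icc hc.le hη.le
      fun u hu => hmη u ⟨hu.1, hu.2.trans hη.le⟩
    have ht := (hlim (-η) 0).div (((tendsto_const_nhds (x := η)).add hx0).mul_const (Real.exp η))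
      (by positivity)
    refine (ht.eventually_const_lt (u := a') (hm.trans_le ?_)).mono fun n hn => hn.trans_le ?_
    · rw [add_zero, le_div_iff₀ (by positivity)]
      refine le_trans ?_ hL
      have : m * Real.exp η ≤ 1 := by
        calc m * Real.exp η ≤ Real.exp (-η) * Real.exp η := by gcongr
          _ = 1 := by rw [← Real.exp_add]; simp
      calc c * m * m * (η * Real.exp η) = c * m * η * (m * Real.exp η) := by ring
        _ ≤ c * m * η := mul_le_of_le_one_right (by positivity) this
    · have := (hx n).1
      rw [Pi.div_apply, div_le_iff₀' (by positivity)]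
      exact fejerMeasure_real_le_mul_coeff hlam hb hmono hradius (hx n) (hN n) hη.le
  · obtain ⟨m, hm, hm0, hm1⟩ : ∃ m, c < a' * m * m ∧ 0 < m ∧ m < 1 := by
      have h : ∀ᶠ m in 𝓝[<] (1 : ℝ), c < a' * m * m :=
        ((Continuous.tendsto' (by fun_prop) 1 a' (by simp)).eventually_const_lt
          ha').filter_mono nhdsWithin_le_nhds
      exact (h.and (Ioo_mem_nhdsLT zero_lt_one)).exists
    obtain ⟨η, hη, hmη, hme⟩ := exists_pos_forall_le_fejer hm1
    have hL := fejerLimit_real_Icc_le hc.le hη.le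
    have ht := (hlim 0 η).div_const (η * Real.exp (-η) * m)
    refine (ht.eventually_lt_const (u := a') ?_).mono fun n hn => lt_of_le_of_lt ?_ hn
    · rw [div_lt_iff₀ (by positivity)]
      have ha0 : 0 < a' := hc.trans ha'
      calc _ ≤ c * η := hL
        _ < a' * m * m * η := by gcongr
        _ ≤ a' * m * Real.exp (-η) * η := by gcongr
        _ = _ := by ring
    · rw [le_div_iff₀' (by positivity)]
      exact mul_coeff_le_fejerMeasure_real hlam hb hmono hradius (hx n) (hN n) hη.le hm0.le
        fun u hu => hmη u ⟨by linarith [hu.1], hu.2⟩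

end

lemma div_growth_sqrt_mul_self {lam α β γ : ℝ} (hγ : 0 < γ) {n : ℝ} (hn : 1 < n) (hnγ : γ < n)
    {x : ℝ} (hx : x = √(γ / n)) (bn : ℝ) :
    bn / (lam * γ ^ (β/2 + 1/4) * Real.log n ^ α /
            (2 ^ (α + 1) * √Real.pi * n ^ (β/2 + 3/4)) * Real.exp (2 * √(γ * n))) =
      bn * Real.exp (-x * n) / (growth lam α β γ x * √x * x) /
        (√(Real.pi / γ) / (2 * Real.pi)) / (Real.log n / (Real.log n - Real.log γ)) ^ α := by
  have hn0 : 0 < n := by linarith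
  have hπ := Real.pi_pos
  have hln : 0 < Real.log n := Real.log_pos hn
  have hld : 0 < Real.log n - Real.log γ := sub_pos.2 (Real.log_lt_log hγ hnγ)
  have hlog : Real.log (1 / x) = (Real.log n - Real.log γ) / 2 := by
    rw [hx, one_div, Real.log_inv, Real.log_sqrt (by positivity), Real.log_div hγ.ne' hn0.ne']
    ring
  have hxp : ∀ s : ℝ, x ^ s = (γ / n) ^ (s / 2) := fun s => by
    rw [hx, Real.sqrt_eq_rpow, ← Real.rpow_mul (by positivity)]
    ring_nf
  have hx0 : 0 < x := by rw [hx]; positivity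
  have hxn : x * n = √(γ * n) := by
    rw [hx, ← Real.sqrt_sq hn0.le, ← Real.sqrt_mul (by positivity), Real.sqrt_sq hn0.le]
    congr 1
    field_simp
  have hγx : γ / x = √(γ * n) := by
    have hxx : x * x = γ / n := by rw [hx, Real.mul_self_sqrt (by positivity)]
    rw [← hxn, div_eq_iff hx0.ne', mul_right_comm, hxx, div_mul_cancel₀ _ hn0.ne']
  have hpow : x ^ β * √x * x = γ ^ (β/2 + 1/4) * √γ / n ^ (β/2 + 3/4) := by
    have h1 : x ^ β * √x * x = x ^ (β + 3/2) := by
      rw [Real.sqrt_eq_rpow, ← Real.rpow_add hx0, ← Real.rpow_add_one hx0.ne']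
      ring_nf
    rw [h1, hxp, Real.div_rpow hγ.le hn0.le, Real.sqrt_eq_rpow, ← Real.rpow_add hγ]
    ring_nf
  have hgr : growth lam α β γ x * √x * x = lam * ((Real.log n - Real.log γ) ^ α / 2 ^ α) *
      Real.exp √(γ * n) * (γ ^ (β/2 + 1/4) * √γ / n ^ (β/2 + 3/4)) := by
    rw [← hpow, growth, hlog, hγx, Real.div_rpow hld.le zero_le_two]
    ring
  rw [hgr, neg_mul, hxn, two_mul, Real.exp_add, Real.exp_neg, Real.rpow_add_one two_ne_zero,
    Real.div_rpow hln.le hld.le, Real.sqrt_div hπ.le]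
  have hππ : √Real.pi * √Real.pi = Real.pi := Real.mul_self_sqrt hπ.le
  have e1 := Real.exp_pos √(γ * n)
  have e2 := Real.rpow_pos_of_pos hγ (β/2 + 1/4)
  have e3 := Real.rpow_pos_of_pos hn0 (β/2 + 3/4)
  have e4 := Real.rpow_pos_of_pos hln α
  have e5 := Real.rpow_pos_of_pos hld α
  have e6 : 0 < √γ := Real.sqrt_pos.2 hγ
  have e7 : 0 < √Real.pi := Real.sqrt_pos.2 hπ
  have e8 := Real.rpow_pos_of_pos two_pos α
  field_simp
  rw [Real.sq_sqrt hπ.le]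

/-- Corollary to Ingham's Tauberian theorem (coefficients version): if moreover the
non-negative coefficients `b_n` are weakly increasing, then
`b_n ~ (λ γ^{β/2+1/4} (log n)^α / (2^{α+1} √π n^{β/2+3/4})) e^{2√(γn)}`. -/
theorem ingham_corollary_coefficients
    (b : ℕ → ℝ) (hb : ∀ n, 0 ≤ b n) (hmono : Monotone b)
    (hradius : ∀ q : ℝ, |q| < 1 → Summable (fun n : ℕ => b n * q ^ n))
    (lam α β γ : ℝ) (hlam : 0 < lam) (hγ : 0 < γ)
    (hreal : Tendsto (fun t : ℝ => (∑' n : ℕ, b n * Real.exp (-t * n)) /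
        (lam * Real.log (1/t) ^ α * t ^ β * Real.exp (γ/t))) (𝓝[>] (0:ℝ)) (𝓝 1))
    (hangle : ∀ Δ : ℝ, 0 < Δ → ∃ C δ : ℝ, 0 < C ∧ 0 < δ ∧ ∀ z : ℂ, 0 < z.re →
        |z.im| ≤ Δ * z.re → ‖z‖ < δ →
        ‖∑' n : ℕ, (b n : ℂ) * Complex.exp (-z * (n : ℂ))‖ ≤
          C * Real.log (1/‖z‖) ^ α * ‖z‖ ^ β * Real.exp (γ/‖z‖)) :
    Tendsto (fun n : ℕ => b n /
        (lam * γ ^ (β/2 + 1/4) * Real.log n ^ α /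
            (2 ^ (α + 1) * Real.sqrt Real.pi * (n:ℝ) ^ (β/2 + 3/4)) *
          Real.exp (2 * Real.sqrt (γ * n)))) atTop (𝓝 1) := by
  obtain ⟨K, hK⟩ := exists_nat_gt (max γ 1)
  have hKi : ∀ i : ℕ, γ < ((i + K : ℕ) : ℝ) ∧ 1 < ((i + K : ℕ) : ℝ) := fun i => by
    have h : (K : ℝ) ≤ ((i + K : ℕ) : ℝ) := by exact_mod_cast Nat.le_add_left K i
    exact ⟨(le_max_left _ _).trans_lt (hK.trans_le h), (le_max_right _ _).trans_lt (hK.trans_le h)⟩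
  have hcast : Tendsto (fun i : ℕ => ((i + K : ℕ) : ℝ)) atTop atTop :=
    tendsto_natCast_atTop_atTop.comp (tendsto_add_atTop_nat K)
  set x : ℕ → ℝ := fun i => √(γ / ((i + K : ℕ) : ℝ)) with hxdef
  have hx : ∀ i, x i ∈ Ioo (0 : ℝ) 1 := fun i => by
    have h0 : (0 : ℝ) < ((i + K : ℕ) : ℝ) := zero_lt_one.trans (hKi i).2
    refine ⟨Real.sqrt_pos.2 (by positivity), ?_⟩
    rw [hxdef, Real.sqrt_lt' zero_lt_one, one_pow, div_lt_one h0]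
    exact (hKi i).1
  have hx0 : Tendsto x atTop (𝓝 0) := by
    have h := (Real.continuous_sqrt.tendsto 0).comp (hcast.const_div_atTop γ)
    rwa [Real.sqrt_zero] at h
  have hN : ∀ i, x i * ((i + K : ℕ) : ℝ) = γ / x i := fun i => by
    have h0 : (0 : ℝ) < ((i + K : ℕ) : ℝ) := zero_lt_one.trans (hKi i).2
    have hxx : x i * x i = γ / ((i + K : ℕ) : ℝ) := Real.mul_self_sqrt (by positivity)
    rw [eq_div_iff (hx i).1.ne', mul_right_comm, hxx, div_mul_cancel₀ _ h0.ne']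
  have hcoeff := tendsto_normalized_coeff hlam hγ hb hmono hradius hreal hangle hx hx0 hN
  have hratio : Tendsto (fun i : ℕ => (Real.log ((i + K : ℕ) : ℝ) /
      (Real.log ((i + K : ℕ) : ℝ) - Real.log γ)) ^ α) atTop (𝓝 1) := by
    have hinv : Tendsto (fun u : ℝ => (1 - Real.log γ / u)⁻¹) atTop (𝓝 1) := by
      simpa using ((tendsto_const_nhds (x := (1 : ℝ))).sub
        ((tendsto_id (α := ℝ)).const_div_atTop (Real.log γ))).inv₀ (by simp)
    have h := (hinv.comp (Real.tendsto_log_atTop.comp hcast)).rpow_const (p := α)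
      (Or.inl one_ne_zero)
    rw [Real.one_rpow] at h
    refine h.congr fun i => ?_
    have hl : 0 < Real.log ((i + K : ℕ) : ℝ) := Real.log_pos (hKi i).2
    simp only [Function.comp_apply]
    rw [one_sub_div hl.ne', inv_div]
  have hc : √(Real.pi / γ) / (2 * Real.pi) ≠ 0 := by have := Real.pi_pos; positivity
  have hfinal := (hcoeff.div_const (√(Real.pi / γ) / (2 * Real.pi))).div hratio one_ne_zero
  rw [div_self hc, div_one] at hfinal
  refine (tendsto_add_atTop_iff_nat K).1 (hfinal.congr fun i => ?_)
  exact (div_growth_sqrt_mul_self hγ (hKi i).2 (hKi i).1 rfl _).symm
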